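/- Let A be a bounded subset of a metric tree M. Then β*(A) = 2·β(A), where β* is the diameter-based ball measure of noncompactness and β is the ball (Hausdorff) measure of noncompactness. -/

import Mathlib

/-- `S` is a metric segment from `x` to `y` in a metric space: `S` contains `x` and `y`, and
the map `z ↦ dist x z` is an isometry from `S` onto the real interval `[0, dist x y]`. -/
def IsMetricSegment {X : Type*} [MetricSpace X] (S : Set X) (x y : X) : Prop :=
  x ∈ S ∧ y ∈ S ∧
    (∀ z ∈ S, ∀ w ∈ S, |dist x z - dist x w| = dist z w) ∧
    (fun z => dist x z) '' S = Set.Icc 0 (dist x y)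

/-- A metric tree structure on a metric space `M`: every pair of points is joined by a unique
metric segment `seg x y`, and if `[x,z] ∩ [z,y] = {z}` then `[x,z] ∪ [z,y] = [x,y]`. -/
structure MetricTree (M : Type*) [MetricSpace M] where
  seg : M → M → Set M
  seg_isSegment : ∀ x y : M, IsMetricSegment (seg x y) x y
  seg_unique : ∀ x y : M, ∀ S : Set M, IsMetricSegment S x y → S = seg x y
  seg_glue : ∀ x y z : M, seg x z ∩ seg z y = {z} → seg x z ∪ seg z y = seg x y

/-- The set (Kuratowski) measure of noncompactness of `A`: the infimum of all `b > 0` such that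
`A` admits a finite cover by subsets of `A` of diameter at most `b`. -/
noncomputable def setMNC {X : Type*} [MetricSpace X] (A : Set X) : ℝ :=
  sInf {b : ℝ | 0 < b ∧ ∃ (n : ℕ) (E : Fin n → Set X),
    (∀ j, E j ⊆ A) ∧ (∀ j, Metric.diam (E j) ≤ b) ∧ A ⊆ ⋃ j, E j}

/-- The ball (Hausdorff) measure of noncompactness of `A`: the infimum of all `b > 0` such that
`A` admits a finite cover by open balls of radius `b` centered in the ambient space. -/
noncomputable def ballMNC {X : Type*} [MetricSpace X] (A : Set X) : ℝ :=
  sInf {b : ℝ | 0 < b ∧ ∃ (n : ℕ) (c : Fin n → X), A ⊆ ⋃ j, Metric.ball (c j) b}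

/-- The diameter-based ball measure of noncompactness of `A`: the infimum of all `b > 0` such
that `A` admits a finite cover by open balls each of diameter at most `b`. -/
noncomputable def ballDiamMNC {X : Type*} [MetricSpace X] (A : Set X) : ℝ :=
  sInf {b : ℝ | 0 < b ∧ ∃ (n : ℕ) (c : Fin n → X) (r : Fin n → ℝ),
    (∀ j, Metric.diam (Metric.ball (c j) (r j)) ≤ b) ∧ A ⊆ ⋃ j, Metric.ball (c j) (r j)}

/-- `b > 0` is Lifschitz for `X` iff there is `a > 1` such that whenever `dist x y > r > 0`,
some closed ball of radius `r` contains `closedBall x (a*r) ∩ closedBall y (b*r)`. -/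
def IsLifschitz (X : Type*) [MetricSpace X] (b : ℝ) : Prop :=
  0 < b ∧ ∃ a : ℝ, 1 < a ∧ ∀ x y : X, ∀ r : ℝ, 0 < r → r < dist x y →
    ∃ z : X, Metric.closedBall x (a * r) ∩ Metric.closedBall y (b * r) ⊆ Metric.closedBall z r

/-- The Lifschitz characteristic of `X`: the supremum of all `b` Lifschitz for `X`. -/
noncomputable def lifschitzChar (X : Type*) [MetricSpace X] : ℝ :=
  sSup {b : ℝ | IsLifschitz X b}

/-!
In a metric tree every point `z` has a gate on `[u, v]`, a point through which every segment from
`z` to a point of `[u, v]` passes. So the midpoint `m` of `[u, v]` satisfies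
`d(z, m) + d(u, v) / 2 = max (d(z, u)) (d(z, v))`. If `u, v ∈ E` nearly realise `diam E`, this puts
every `z ∈ E` within about `diam E / 2` of `m`. Hence each ball `E` of a diameter-based cover, whose
diameter may be far below twice its own radius, lies in a recentred ball of radius about
`diam E / 2`.
-/

namespace IsMetricSegment

variable {X : Type*} [MetricSpace X] {S : Set X} {x y p q : X}

theorem left_mem (h : IsMetricSegment S x y) : x ∈ S := h.1

theorem right_mem (h : IsMetricSegment S x y) : y ∈ S := h.2.1

theorem abs_dist_sub_dist (h : IsMetricSegment S x y) (hp : p ∈ S) (hq : q ∈ S) :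
    |dist x p - dist x q| = dist p q :=
  h.2.2.1 p hp q hq

theorem image_dist (h : IsMetricSegment S x y) : dist x '' S = Set.Icc 0 (dist x y) := h.2.2.2

theorem exists_dist_eq (h : IsMetricSegment S x y) {t : ℝ} (ht : t ∈ Set.Icc 0 (dist x y)) :
    ∃ p ∈ S, dist x p = t := by
  rwa [← h.image_dist] at ht

theorem dist_left_le (h : IsMetricSegment S x y) (hp : p ∈ S) : dist x p ≤ dist x y :=
  (h.image_dist ▸ Set.mem_image_of_mem _ hp : dist x p ∈ Set.Icc 0 (dist x y)).2

theorem dist_eq_sub (h : IsMetricSegment S x y) (hp : p ∈ S) (hq : q ∈ S)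
    (hpq : dist x p ≤ dist x q) : dist p q = dist x q - dist x p := by
  rw [← h.abs_dist_sub_dist hp hq, abs_sub_comm, abs_of_nonneg (sub_nonneg.2 hpq)]

theorem dist_add_dist (h : IsMetricSegment S x y) (hp : p ∈ S) :
    dist x p + dist p y = dist x y := by
  rw [h.dist_eq_sub hp h.right_mem (h.dist_left_le hp), add_sub_cancel]

theorem symm (h : IsMetricSegment S x y) : IsMetricSegment S y x := by
  have dist_right {w : X} (hw : w ∈ S) : dist y w = dist x y - dist x w := by
    rw [dist_comm, h.dist_eq_sub hw h.right_mem (h.dist_left_le hw)]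
  refine ⟨h.right_mem, h.left_mem, fun z hz w hw => ?_, ?_⟩
  · rw [dist_right hz, dist_right hw, sub_sub_sub_cancel_left, abs_sub_comm,
      h.abs_dist_sub_dist hz hw]
  · calc dist y '' S = (fun w => dist x y - dist x w) '' S :=
          Set.image_congr fun _ => dist_right
      _ = (dist x y - ·) '' (dist x '' S) := (Set.image_image _ _ _).symm
      _ = Set.Icc 0 (dist y x) := by
          rw [h.image_dist, Set.image_const_sub_Icc, sub_self, sub_zero, dist_comm]

theorem subsegment (h : IsMetricSegment S x y) (hp : p ∈ S) (hq : q ∈ S)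
    (hpq : dist x p ≤ dist x q) :
    IsMetricSegment {w ∈ S | dist x w ∈ Set.Icc (dist x p) (dist x q)} p q := by
  refine ⟨⟨hp, le_rfl, hpq⟩, ⟨hq, hpq, le_rfl⟩, ?_, Set.Subset.antisymm ?_ ?_⟩
  · rintro z ⟨hz, hpz, -⟩ w ⟨hw, hpw, -⟩
    rw [h.dist_eq_sub hp hz hpz, h.dist_eq_sub hp hw hpw, sub_sub_sub_cancel_right,
      h.abs_dist_sub_dist hz hw]
  · rintro _ ⟨w, ⟨hw, hpw, hwq⟩, rfl⟩
    refine ⟨dist_nonneg, ?_⟩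
    simpa only [h.dist_eq_sub hp hw hpw, h.dist_eq_sub hp hq hpq] using sub_le_sub_right hwq _
  · rintro t ⟨ht_nonneg, ht_le⟩
    rw [h.dist_eq_sub hp hq hpq] at ht_le
    obtain ⟨w, hw, hxw⟩ : ∃ w ∈ S, dist x w = dist x p + t :=
      h.exists_dist_eq ⟨by positivity, by linarith [h.dist_left_le hq]⟩
    have hpw : dist x p ≤ dist x w := by linarith
    refine ⟨w, ⟨hw, hpw, by linarith⟩, ?_⟩
    simp only [h.dist_eq_sub hp hw hpw, hxw, add_sub_cancel_left]

theorem isCompact (h : IsMetricSegment S x y) : IsCompact S := by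
  have isometry_dist : Isometry (S.domRestrict (dist x)) :=
    Isometry.of_dist_eq fun a b => h.abs_dist_sub_dist a.2 b.2
  rw [isCompact_iff_isCompact_univ, isometry_dist.isEmbedding.isCompact_iff, Set.image_univ,
    Set.range_domRestrict, h.image_dist]
  exact isCompact_Icc

end IsMetricSegment

/-- A metric space has Jung constant one if every nonempty bounded set `E` has Chebyshev radius
`diam E / 2`, the least value possible in any metric space. Since this infimum of radii need not be
attained, `E` is only required to lie in some ball of each radius `ρ > diam E / 2`. -/
def HasJungConstantOne (X : Type*) [PseudoMetricSpace X] : Prop :=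
  ∀ E : Set X, E.Nonempty → Bornology.IsBounded E →
    ∀ ρ > Metric.diam E / 2, ∃ m, E ⊆ Metric.ball m ρ

namespace MetricTree

variable {M : Type*} [MetricSpace M]

theorem seg_comm (T : MetricTree M) (x y : M) : T.seg x y = T.seg y x :=
  T.seg_unique y x _ (T.seg_isSegment x y).symm

theorem seg_subset_seg (T : MetricTree M) {x y p q : M} (hp : p ∈ T.seg x y)
    (hq : q ∈ T.seg x y) : T.seg p q ⊆ T.seg x y := by
  wlog hpq : dist x p ≤ dist x q generalizing p q
  · rw [T.seg_comm p q]
    exact this hq hp (le_of_not_ge hpq)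
  rw [← T.seg_unique p q _ ((T.seg_isSegment x y).subsegment hp hq hpq)]
  exact Set.sep_subset _ _

/- The gate is the point of `[u, v]` nearest to `z`: the segments `[z, p]` and `[p, q]` then meet
only at `p`, so they glue. -/
theorem exists_gate (T : MetricTree M) (u v z : M) :
    ∃ p ∈ T.seg u v, ∀ q ∈ T.seg u v, dist z p + dist p q = dist z q := by
  have hS := T.seg_isSegment u v
  obtain ⟨p, hp, hp_min⟩ := hS.isCompact.exists_isMinOn ⟨u, hS.left_mem⟩
    (continuous_const.dist continuous_id : Continuous (dist z)).continuousOn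
  refine ⟨p, hp, fun q hq => ?_⟩
  have hzp := T.seg_isSegment z p
  have inter_eq : T.seg z p ∩ T.seg p q = {p} := by
    refine Set.Subset.antisymm ?_
      (Set.singleton_subset_iff.2 ⟨hzp.right_mem, (T.seg_isSegment p q).left_mem⟩)
    rintro w ⟨hw_zp, hw_pq⟩
    have hpw : dist z p ≤ dist z w := hp_min (T.seg_subset_seg hp hq hw_pq)
    exact dist_le_zero.1 (by linarith [hzp.dist_add_dist hw_zp])
  have hp_zq : p ∈ T.seg z q := T.seg_glue z q p inter_eq ▸ Or.inl hzp.right_mem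
  exact (T.seg_isSegment z q).dist_add_dist hp_zq

theorem exists_dist_add_half_dist_eq_max (T : MetricTree M) (u v : M) :
    ∃ m, ∀ z, dist z m + dist u v / 2 = max (dist z u) (dist z v) := by
  have hS := T.seg_isSegment u v
  obtain ⟨m, hm, hum⟩ : ∃ m ∈ T.seg u v, dist u m = dist u v / 2 :=
    hS.exists_dist_eq ⟨by positivity, half_le_self dist_nonneg⟩
  refine ⟨m, fun z => ?_⟩
  obtain ⟨p, hp, gate⟩ := T.exists_gate u v z
  have hpm : dist p m = |dist u p - dist u v / 2| := by rw [← hum, hS.abs_dist_sub_dist hp hm]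
  have hpv : dist p v = dist u v - dist u p := eq_sub_of_add_eq' (hS.dist_add_dist hp)
  rw [← gate m hm, ← gate u hS.left_mem, ← gate v hS.right_mem, dist_comm p u, hpm, hpv]
  grind

theorem hasJungConstantOne (T : MetricTree M) : HasJungConstantOne M := by
  intro E hE_nonempty hE ρ hρ
  obtain ⟨u, hu, v, hv, huv⟩ : ∃ u ∈ E, ∃ v ∈ E, 2 * (Metric.diam E - ρ) < dist u v := by
    by_contra! h
    linarith [Metric.diam_le_of_forall_dist_le_of_nonempty hE_nonempty h]
  obtain ⟨m, hm⟩ := T.exists_dist_add_half_dist_eq_max u v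
  refine ⟨m, fun z hz => ?_⟩
  have hz_le : max (dist z u) (dist z v) ≤ Metric.diam E :=
    max_le (Metric.dist_le_diam_of_mem hE hz hu) (Metric.dist_le_diam_of_mem hE hz hv)
  rw [Metric.mem_ball]
  linarith [hm z]

end MetricTree

theorem exists_finite_ball_cover {X : Type*} [PseudoMetricSpace X] {A : Set X}
    (hA : Bornology.IsBounded A) :
    ∃ b > 0, ∃ (n : ℕ) (c : Fin n → X), A ⊆ ⋃ j, Metric.ball (c j) b := by
  rcases A.eq_empty_or_nonempty with rfl | ⟨x, -⟩
  · exact ⟨1, one_pos, 0, Fin.elim0, Set.empty_subset _⟩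
  · obtain ⟨b, hb, hAb⟩ := hA.subset_ball_lt 0 x
    exact ⟨b, hb, 1, fun _ => x, hAb.trans (Set.subset_iUnion_of_subset 0 subset_rfl)⟩

section MeasuresOfNoncompactness

variable {X : Type*} [MetricSpace X] {A : Set X}

theorem ballMNC_le {b : ℝ} (hb : 0 < b) {n : ℕ} {c : Fin n → X}
    (hc : A ⊆ ⋃ j, Metric.ball (c j) b) : ballMNC A ≤ b :=
  csInf_le ⟨0, fun _ h => h.1.le⟩ ⟨hb, n, c, hc⟩

theorem ballDiamMNC_le {b : ℝ} (hb : 0 < b) {n : ℕ} {c : Fin n → X} {r : Fin n → ℝ}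
    (hr : ∀ j, Metric.diam (Metric.ball (c j) (r j)) ≤ b)
    (hc : A ⊆ ⋃ j, Metric.ball (c j) (r j)) : ballDiamMNC A ≤ b :=
  csInf_le ⟨0, fun _ h => h.1.le⟩ ⟨hb, n, c, r, hr, hc⟩

theorem ballDiamMNC_le_two_mul_ballMNC (hA : Bornology.IsBounded A) :
    ballDiamMNC A ≤ 2 * ballMNC A := by
  suffices ballDiamMNC A / 2 ≤ ballMNC A by linarith
  refine le_csInf (exists_finite_ball_cover hA) ?_
  rintro b ⟨hb, n, c, hc⟩
  have : ballDiamMNC A ≤ 2 * b :=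
    ballDiamMNC_le (by positivity) (fun _ => Metric.diam_ball hb.le) hc
  linarith

theorem HasJungConstantOne.two_mul_ballMNC_le_ballDiamMNC (hX : HasJungConstantOne X)
    (hA : Bornology.IsBounded A) : 2 * ballMNC A ≤ ballDiamMNC A := by
  obtain ⟨b₀, hb₀, n₀, c₀, hc₀⟩ := exists_finite_ball_cover hA
  refine le_csInf ⟨2 * b₀, by positivity, n₀, c₀, _, fun _ => Metric.diam_ball hb₀.le, hc₀⟩ ?_
  rintro b ⟨hb, n, c, r, hr, hc⟩
  suffices ballMNC A ≤ b / 2 by linarith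
  refine le_of_forall_gt_imp_ge_of_dense fun ρ hρ => ?_
  have exists_ball (j : Fin n) : ∃ m, Metric.ball (c j) (r j) ⊆ Metric.ball m ρ := by
    rcases (Metric.ball (c j) (r j)).eq_empty_or_nonempty with h_empty | h_nonempty
    · exact ⟨c j, h_empty ▸ Set.empty_subset _⟩
    · exact hX _ h_nonempty Metric.isBounded_ball ρ (by linarith [hr j])
  choose m hm using exists_ball
  exact ballMNC_le (by linarith) (hc.trans (Set.iUnion_mono hm))

end MeasuresOfNoncompactness

theorem stmt_3_general {X : Type*} [MetricSpace X] (hX : HasJungConstantOne X)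
    {A : Set X} (hA : Bornology.IsBounded A) : ballDiamMNC A = 2 * ballMNC A :=
  (ballDiamMNC_le_two_mul_ballMNC hA).antisymm (hX.two_mul_ballMNC_le_ballDiamMNC hA)

theorem stmt_3 {M : Type*} [MetricSpace M] (T : MetricTree M)
    (A : Set M) (hA : Bornology.IsBounded A) :
    ballDiamMNC A = 2 * ballMNC A :=
  stmt_3_general T.hasJungConstantOne hA
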